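/- Fix constants 0 < δ ≤ Δ and an integer k ≥ 3. For every Alice value density v_A there exists a deterministic Alice strategy S_A for the repeated k-cut game, independent of the parameters α and c below, such that: for every α < 1 and every c > 0 there exist C > 0 and T₀ ∈ ℕ with the property that for every Bob value density v_B, every deterministic Bob strategy that guarantees regret at most c·T'^α for every horizon T', and every horizon T ≥ T₀, Alice's Stackelberg regret under S_A over horizon T is at most C·T·k^{3/4}/log T. -/

import Mathlib

open MeasureTheory Set

noncomputable section

attribute [local instance] Classical.propDecidable

/-- A value density: measurable, bounded in `[δ, Δ]` on `[0,1]`, integrating to 1 on `[0,1]`. -/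
def IsValueDensity (δ Δ : ℝ) (v : ℝ → ℝ) : Prop :=
  Measurable v ∧ (∀ x ∈ Set.Icc (0:ℝ) 1, v x ∈ Set.Icc δ Δ) ∧
    (∫ x in Set.Icc (0:ℝ) 1, v x) = 1

/-- The value of a piece `S` under density `v`. -/
def pieceVal (v : ℝ → ℝ) (S : Set ℝ) : ℝ := ∫ x in S, v x

/-- Extended cut points: `0, c 0, …, c (k-1), 1`. -/
def extCuts (k : ℕ) (c : Fin k → ℝ) : ℕ → ℝ := fun i =>
  if i = 0 then 0 else if h : i - 1 < k then c ⟨i - 1, h⟩ else 1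

/-- A valid vector of `k` cut points: nondecreasing, within `[0,1]`. -/
def ValidCuts (k : ℕ) (c : Fin k → ℝ) : Prop :=
  Monotone c ∧ ∀ i, c i ∈ Set.Icc (0:ℝ) 1

/-- The two pieces of the alternating partition induced by cuts `c`:
`true` gives the union of even-indexed intervals, `false` the odd-indexed ones. -/
def altPiece (k : ℕ) (c : Fin k → ℝ) (b : Bool) : Set ℝ :=
  ⋃ i ∈ Finset.range (k + 1),
    if decide (i % 2 = 0) = b then Set.Icc (extCuts k c i) (extCuts k c (i + 1)) else ∅

/-- Alice's Stackelberg value with `k` cuts: max of `V_A(Z_A)` over alternating partitions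
`(Z_A, Z_B)` induced by `k` cut points with `V_B(Z_B) ≥ 1/2`. -/
def stackelbergValue (k : ℕ) (vA vB : ℝ → ℝ) : ℝ :=
  sSup { u : ℝ | ∃ (c : Fin k → ℝ) (b : Bool), ValidCuts k c ∧
    1 / 2 ≤ pieceVal vB (altPiece k c (!b)) ∧ u = pieceVal vA (altPiece k c b) }

/-- A history of play: the list of (Alice's cuts, Bob's choice) in past rounds. -/
abbrev Hist (k : ℕ) := List ((Fin k → ℝ) × Bool)

/-- Alice's deterministic strategy: horizon and history ↦ next cut vector. -/
abbrev AliceStrategy (k : ℕ) := ℕ → Hist k → (Fin k → ℝ)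

/-- Bob's deterministic strategy: horizon, history, and Alice's current cuts ↦ choice. -/
abbrev BobStrategy (k : ℕ) := ℕ → Hist k → (Fin k → ℝ) → Bool

/-- The history of play after `t` rounds. -/
def playHist (k : ℕ) (SA : AliceStrategy k) (SB : BobStrategy k) (T : ℕ) : ℕ → Hist k
  | 0 => []
  | t + 1 =>
      let h := playHist k SA SB T t
      let cuts := SA T h
      h ++ [(cuts, SB T h cuts)]

/-- Alice's cuts in round `t` (0-indexed). -/
def roundCuts (k : ℕ) (SA : AliceStrategy k) (SB : BobStrategy k) (T t : ℕ) : Fin k → ℝ :=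
  SA T (playHist k SA SB T t)

/-- Bob's choice in round `t` (0-indexed). -/
def roundChoice (k : ℕ) (SA : AliceStrategy k) (SB : BobStrategy k) (T t : ℕ) : Bool :=
  SB T (playHist k SA SB T t) (roundCuts k SA SB T t)

/-- Alice's Stackelberg regret over horizon `T`: in each round she receives the value of
the piece Bob did not choose. -/
def aliceRegret (k : ℕ) (vA vB : ℝ → ℝ) (SA : AliceStrategy k) (SB : BobStrategy k)
    (T : ℕ) : ℝ :=
  ∑ t ∈ Finset.range T,
    (stackelbergValue k vA vB -
      pieceVal vA (altPiece k (roundCuts k SA SB T t) (!(roundChoice k SA SB T t))))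

/-- Bob's regret over horizon `T` relative to always choosing his preferred piece. -/
def bobRegret (k : ℕ) (vB : ℝ → ℝ) (SA : AliceStrategy k) (SB : BobStrategy k) (T : ℕ) : ℝ :=
  ∑ t ∈ Finset.range T,
    (max (pieceVal vB (altPiece k (roundCuts k SA SB T t) true))
        (pieceVal vB (altPiece k (roundCuts k SA SB T t) false)) -
      pieceVal vB (altPiece k (roundCuts k SA SB T t) (roundChoice k SA SB T t)))

/-- Bob's strategy guarantees regret at most `R T` against every Alice strategy and horizon. -/
def BobGuarantees (k : ℕ) (vB : ℝ → ℝ) (SB : BobStrategy k) (R : ℕ → ℝ) : Prop :=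
  ∀ (SA : AliceStrategy k) (T : ℕ), bobRegret k vB SA SB T ≤ R T

/-- The myopic Bob: chooses the piece of larger `V_B`-value, breaking ties towards
the piece of smaller `V_A`-value. -/
def myopicBob (k : ℕ) (vA vB : ℝ → ℝ) : BobStrategy k := fun _ _ c =>
  if pieceVal vB (altPiece k c false) < pieceVal vB (altPiece k c true) then true
  else if pieceVal vB (altPiece k c true) < pieceVal vB (altPiece k c false) then false
  else if pieceVal vA (altPiece k c true) ≤ pieceVal vA (altPiece k c false) then true
  else false

/-- Alice's strategy always produces valid cut vectors. -/
def AliceValid (k : ℕ) (SA : AliceStrategy k) : Prop := ∀ T h, ValidCuts k (SA T h)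

/-!
At horizon `T` Alice restricts herself to cut points on the grid of spacing `1/n` with
`n = ⌈log T⌉`, and to the finitely many *offers* of such cuts together with the piece she hopes to
keep. Shrinking an interval of a partition that is feasible for the Stackelberg problem and rounding
the cuts to the grid yields, at a loss `O(1/n)` for Alice, an offer that gives Bob at least
`1/2 + 1/n`. Each refusal of that offer costs Bob `2/n`, so his regret bound limits how often he
refuses it.

Alice therefore always proposes her best offer that Bob has refused fewer than `m` times, where
`m ≈ T / n^(k+1)` exceeds what Bob can afford for the robust offer. That offer is never eliminated,
so every accepted round loses her only `O(1/n)`, while the `O(n^k)` offers can be refused in at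
most `O(n^k m) = O(T/n)` rounds altogether.
-/

namespace IsValueDensity

variable {δ Δ : ℝ} {v : ℝ → ℝ} {a b : ℝ}

lemma integrableOn_Icc (hv : IsValueDensity δ Δ v) : IntegrableOn v (Icc 0 1) :=
  Measure.integrableOn_of_bounded (M := max |δ| |Δ|) (by simp) hv.1.aestronglyMeasurable <|
    (ae_restrict_iff' measurableSet_Icc).2 <| .of_forall fun x hx =>
      abs_le_max_abs_abs (hv.2.1 x hx).1 (hv.2.1 x hx).2

lemma intervalIntegrable (hv : IsValueDensity δ Δ v) (ha : a ∈ Icc (0 : ℝ) 1)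
    (hb : b ∈ Icc (0 : ℝ) 1) : IntervalIntegrable v volume a b :=
  (hv.integrableOn_Icc.mono_set (uIcc_subset_Icc ha hb)).intervalIntegrable

lemma integral_zero_one (hv : IsValueDensity δ Δ v) : ∫ x in (0 : ℝ)..1, v x = 1 := by
  rw [intervalIntegral.integral_of_le zero_le_one, ← integral_Icc_eq_integral_Ioc, hv.2.2]

lemma upper_nonneg (hδ : 0 ≤ δ) (hv : IsValueDensity δ Δ v) : 0 ≤ Δ :=
  have h0 := hv.2.1 0 (left_mem_Icc.2 zero_le_one)
  hδ.trans (h0.1.trans h0.2)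

lemma abs_integral_le (hδ : 0 ≤ δ) (hv : IsValueDensity δ Δ v) (ha : a ∈ Icc (0 : ℝ) 1)
    (hb : b ∈ Icc (0 : ℝ) 1) : |∫ x in a..b, v x| ≤ Δ * |b - a| := by
  rw [← Real.norm_eq_abs]
  refine intervalIntegral.norm_integral_le_of_norm_le_const fun x hx => ?_
  have hvx := hv.2.1 x (uIcc_subset_Icc ha hb (uIoc_subset_uIcc hx))
  rw [Real.norm_of_nonneg (hδ.trans hvx.1)]
  exact hvx.2

lemma integral_le (hδ : 0 ≤ δ) (hv : IsValueDensity δ Δ v) (ha : a ∈ Icc (0 : ℝ) 1)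
    (hb : b ∈ Icc (0 : ℝ) 1) (hab : a ≤ b) : ∫ x in a..b, v x ≤ Δ * (b - a) := by
  have h := (le_abs_self _).trans (hv.abs_integral_le hδ ha hb)
  rwa [abs_of_nonneg (sub_nonneg.2 hab)] at h

lemma le_integral (hv : IsValueDensity δ Δ v) (ha : a ∈ Icc (0 : ℝ) 1)
    (hb : b ∈ Icc (0 : ℝ) 1) (hab : a ≤ b) : δ * (b - a) ≤ ∫ x in a..b, v x := by
  have h := intervalIntegral.integral_mono_on (f := fun _ => δ) hab intervalIntegrable_const
    (hv.intervalIntegrable ha hb) fun x hx => (hv.2.1 x (Icc_subset_Icc ha.1 hb.2 hx)).1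
  rwa [intervalIntegral.integral_const, smul_eq_mul, mul_comm] at h

lemma integral_nonneg (hδ : 0 ≤ δ) (hv : IsValueDensity δ Δ v) (ha : a ∈ Icc (0 : ℝ) 1)
    (hb : b ∈ Icc (0 : ℝ) 1) (hab : a ≤ b) : 0 ≤ ∫ x in a..b, v x :=
  (mul_nonneg hδ (sub_nonneg.2 hab)).trans (hv.le_integral ha hb hab)

end IsValueDensity

section Cuts

variable {k : ℕ} {c : Fin k → ℝ}

lemma extCuts_zero (k : ℕ) (c : Fin k → ℝ) : extCuts k c 0 = 0 := by simp [extCuts]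

lemma extCuts_of_lt {i : ℕ} (hi : k < i) : extCuts k c i = 1 := by
  simp [extCuts, (Nat.zero_lt_of_lt hi).ne', show ¬i - 1 < k by omega]

lemma extCuts_succ (c : Fin k → ℝ) (i : Fin k) : extCuts k c (i + 1) = c i := by simp [extCuts]

lemma ValidCuts.extCuts_mem (hc : ValidCuts k c) (i : ℕ) : extCuts k c i ∈ Icc (0 : ℝ) 1 := by
  unfold extCuts
  split_ifs
  · simp
  · exact hc.2 _
  · simp

lemma validCuts_iff_monotone_extCuts : ValidCuts k c ↔ Monotone (extCuts k c) := by
  constructor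
  · refine fun hc => monotone_nat_of_le_succ fun i => ?_
    rcases i with _ | i
    · exact (extCuts_zero k c).trans_le (hc.extCuts_mem _).1
    · by_cases hi : i + 1 < k
      · rw [extCuts_succ _ ⟨i, by omega⟩, extCuts_succ _ ⟨i + 1, hi⟩]
        exact hc.1 (Nat.le_succ i)
      · exact (hc.extCuts_mem _).2.trans_eq (extCuts_of_lt (by omega)).symm
  · intro h
    refine ⟨fun i j hij => ?_, fun i => ⟨?_, ?_⟩⟩
    · rw [← extCuts_succ c i, ← extCuts_succ c j]
      exact h (Nat.succ_le_succ hij)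
    · rw [← extCuts_zero k c, ← extCuts_succ c i]
      exact h (Nat.zero_le _)
    · rw [← extCuts_of_lt (c := c) k.lt_succ_self, ← extCuts_succ c i]
      exact h (by omega)

lemma ValidCuts.monotone_extCuts (hc : ValidCuts k c) : Monotone (extCuts k c) :=
  validCuts_iff_monotone_extCuts.1 hc

lemma validCuts_const {x : ℝ} (hx : x ∈ Icc (0 : ℝ) 1) : ValidCuts k fun _ => x :=
  ⟨monotone_const, fun _ => hx⟩

lemma extCuts_update (c : Fin k → ℝ) (p : Fin k) (w : ℝ) :
    extCuts k (Function.update c p w) = Function.update (extCuts k c) (p + 1) w := by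
  funext i
  rcases i with _ | i
  · simp [extCuts_zero]
  · by_cases hi : i < k
    · rw [extCuts_succ _ ⟨i, hi⟩, Function.update_apply, Function.update_apply,
        extCuts_succ _ ⟨i, hi⟩]
      simp [Fin.ext_iff]
    · rw [extCuts_of_lt (by omega), Function.update_of_ne (by omega), extCuts_of_lt (by omega)]

lemma ValidCuts.update (hc : ValidCuts k c) (p : Fin k) {w : ℝ}
    (hw : w ∈ Icc (extCuts k c p) (extCuts k c (p + 2))) :
    ValidCuts k (Function.update c p w) := by
  rw [validCuts_iff_monotone_extCuts, extCuts_update]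
  refine monotone_nat_of_le_succ fun i => ?_
  have hi := hc.monotone_extCuts (Nat.le_succ i)
  simp only [Function.update_apply]
  split_ifs with h₁ h₂ h₂
  · omega
  · exact h₁ ▸ hw.2
  · exact (show i = p by omega) ▸ hw.1
  · exact hi

lemma abs_extCuts_sub_le {c' : Fin k → ℝ} {η : ℝ} (hη : 0 ≤ η) (h : ∀ i, |c' i - c i| ≤ η)
    (i : ℕ) : |extCuts k c' i - extCuts k c i| ≤ η := by
  unfold extCuts
  split_ifs
  · simpa using hη
  · exact h _
  · simpa using hη

end Cuts

/-- The indices `i` of the intervals `[x_i, x_{i+1}]` that make up the piece `altPiece k c b`. -/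
def pieceIndices (k : ℕ) (b : Bool) : Finset ℕ :=
  {i ∈ Finset.range (k + 1) | decide (i % 2 = 0) = b}

lemma pieceIndices_not (k : ℕ) (b : Bool) :
    pieceIndices k (!b) = {i ∈ Finset.range (k + 1) | ¬decide (i % 2 = 0) = b} := by
  simp only [pieceIndices, Bool.eq_not]

lemma card_pieceIndices_le (k : ℕ) (b : Bool) : (pieceIndices k b).card ≤ k + 1 :=
  (Finset.card_filter_le _ _).trans_eq (Finset.card_range _)

lemma le_of_mem_pieceIndices {k i : ℕ} {b : Bool} (hi : i ∈ pieceIndices k b) : i ≤ k :=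
  Finset.mem_range_succ_iff.1 (Finset.mem_filter.1 hi).1

lemma ne_succ_of_mem_pieceIndices {k i j : ℕ} {b : Bool} (hi : i ∈ pieceIndices k b)
    (hj : j ∈ pieceIndices k b) : i ≠ j + 1 := by
  have hij := (Finset.mem_filter.1 hi).2.trans (Finset.mem_filter.1 hj).2.symm
  have : i % 2 = 0 ↔ j % 2 = 0 := by simpa using hij
  omega

lemma altPiece_eq_biUnion (k : ℕ) (c : Fin k → ℝ) (b : Bool) :
    altPiece k c b = ⋃ i ∈ pieceIndices k b, Icc (extCuts k c i) (extCuts k c (i + 1)) := by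
  ext x
  simp only [altPiece, pieceIndices, mem_iUnion, Set.mem_ite_empty_right, Finset.mem_filter,
    exists_prop, and_assoc]

section PieceValues

variable {δ Δ : ℝ} {v : ℝ → ℝ} {k : ℕ} {c c' : Fin k → ℝ} {b : Bool}

lemma pieceVal_altPiece (hv : IsValueDensity δ Δ v) (hc : ValidCuts k c) (b : Bool) :
    pieceVal v (altPiece k c b) =
      ∑ i ∈ pieceIndices k b, ∫ x in extCuts k c i..extCuts k c (i + 1), v x := by
  have hle (i : ℕ) : extCuts k c i ≤ extCuts k c (i + 1) := hc.monotone_extCuts i.le_succ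
  have hae : altPiece k c b =ᵐ[volume]
      ⋃ i ∈ pieceIndices k b, Ioc (extCuts k c i) (extCuts k c (i + 1)) := by
    rw [altPiece_eq_biUnion]
    exact .countable_iUnion fun _ => .countable_iUnion fun _ => Ioc_ae_eq_Icc.symm
  have hdisj : Pairwise (Function.onFun Disjoint fun i =>
      Ioc (extCuts k c i) (extCuts k c (i + 1))) :=
    hc.monotone_extCuts.pairwise_disjoint_on_Ioc_succ
  rw [pieceVal, setIntegral_congr_set hae,
    integral_biUnion_finset _ (fun _ _ => measurableSet_Ioc)
      (hdisj.set_pairwise _)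
      (fun i _ => (intervalIntegrable_iff_integrableOn_Ioc_of_le (hle i)).1
        (hv.intervalIntegrable (hc.extCuts_mem i) (hc.extCuts_mem (i + 1))))]
  exact Finset.sum_congr rfl fun i _ => (intervalIntegral.integral_of_le (hle i)).symm

lemma pieceVal_nonneg (hδ : 0 ≤ δ) (hv : IsValueDensity δ Δ v) (hc : ValidCuts k c) (b : Bool) :
    0 ≤ pieceVal v (altPiece k c b) := by
  rw [pieceVal_altPiece hv hc]
  exact Finset.sum_nonneg fun i _ => hv.integral_nonneg hδ (hc.extCuts_mem i)
    (hc.extCuts_mem (i + 1)) (hc.monotone_extCuts i.le_succ)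

lemma pieceVal_add_pieceVal_not (hv : IsValueDensity δ Δ v) (hc : ValidCuts k c) (b : Bool) :
    pieceVal v (altPiece k c b) + pieceVal v (altPiece k c (!b)) = 1 := by
  rw [pieceVal_altPiece hv hc, pieceVal_altPiece hv hc, pieceIndices_not, pieceIndices,
    Finset.sum_filter_add_sum_filter_not, intervalIntegral.sum_integral_adjacent_intervals
      (fun i _ => hv.intervalIntegrable (hc.extCuts_mem i) (hc.extCuts_mem (i + 1))),
    extCuts_zero, extCuts_of_lt k.lt_succ_self, hv.integral_zero_one]

lemma pieceVal_le_one (hδ : 0 ≤ δ) (hv : IsValueDensity δ Δ v) (hc : ValidCuts k c) (b : Bool) :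
    pieceVal v (altPiece k c b) ≤ 1 := by
  linarith [pieceVal_add_pieceVal_not hv hc b, pieceVal_nonneg hδ hv hc (!b)]

lemma pieceVal_one_false (hv : IsValueDensity δ Δ v) (k : ℕ) :
    pieceVal v (altPiece k (fun _ => 1) false) = 0 := by
  have hext (i : ℕ) (hi : i ≠ 0) : extCuts k (fun _ => 1) i = 1 := by simp [extCuts, hi]
  rw [pieceVal_altPiece hv (validCuts_const (right_mem_Icc.2 zero_le_one))]
  refine Finset.sum_eq_zero fun i hi => ?_
  have hi0 : i ≠ 0 := by
    rintro rfl
    simp [pieceIndices] at hi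
  rw [hext i hi0, hext (i + 1) i.succ_ne_zero, intervalIntegral.integral_same]

lemma abs_pieceVal_sub_le (hδ : 0 ≤ δ) (hv : IsValueDensity δ Δ v) (hc : ValidCuts k c)
    (hc' : ValidCuts k c') {η : ℝ} (hη : 0 ≤ η) (h : ∀ i, |c' i - c i| ≤ η) (b : Bool) :
    |pieceVal v (altPiece k c' b) - pieceVal v (altPiece k c b)| ≤ (k + 1) * (2 * (Δ * η)) := by
  have hΔ := hv.upper_nonneg hδ
  have hendpoint (i : ℕ) : |∫ x in extCuts k c' i..extCuts k c i, v x| ≤ Δ * η :=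
    (hv.abs_integral_le hδ (hc'.extCuts_mem i) (hc.extCuts_mem i)).trans <| by
      rw [abs_sub_comm]
      exact mul_le_mul_of_nonneg_left (abs_extCuts_sub_le hη h i) hΔ
  have hinterval (i : ℕ) : |(∫ x in extCuts k c' i..extCuts k c' (i + 1), v x) -
      ∫ x in extCuts k c i..extCuts k c (i + 1), v x| ≤ 2 * (Δ * η) := by
    rw [intervalIntegral.integral_interval_sub_interval_comm
      (hv.intervalIntegrable (hc'.extCuts_mem _) (hc'.extCuts_mem _))
      (hv.intervalIntegrable (hc.extCuts_mem _) (hc.extCuts_mem _))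
      (hv.intervalIntegrable (hc'.extCuts_mem _) (hc.extCuts_mem _)), two_mul]
    exact (abs_sub _ _).trans (add_le_add (hendpoint i) (hendpoint (i + 1)))
  rw [pieceVal_altPiece hv hc, pieceVal_altPiece hv hc', ← Finset.sum_sub_distrib]
  calc _ ≤ ∑ _i ∈ pieceIndices k b, 2 * (Δ * η) :=
        (Finset.abs_sum_le_sum_abs _ _).trans (Finset.sum_le_sum fun i _ => hinterval i)
    _ = (pieceIndices k b).card * (2 * (Δ * η)) := by rw [Finset.sum_const, nsmul_eq_mul]
    _ ≤ (k + 1) * (2 * (Δ * η)) := by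
        gcongr
        exact_mod_cast card_pieceIndices_le k b

lemma exists_long_interval_of_lt_pieceVal (hδ : 0 ≤ δ) (hv : IsValueDensity δ Δ v)
    (hc : ValidCuts k c) {s : ℝ} (hs : 0 ≤ s)
    (h : (k + 1) * (Δ * s) < pieceVal v (altPiece k c b)) :
    ∃ j ∈ pieceIndices k b, s ≤ extCuts k c (j + 1) - extCuts k c j := by
  have hΔ := hv.upper_nonneg hδ
  by_contra! hshort
  refine h.not_ge ?_
  calc pieceVal v (altPiece k c b)
      = ∑ i ∈ pieceIndices k b, ∫ x in extCuts k c i..extCuts k c (i + 1), v x :=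
        pieceVal_altPiece hv hc b
    _ ≤ ∑ _i ∈ pieceIndices k b, Δ * s := Finset.sum_le_sum fun i hi =>
        (hv.integral_le hδ (hc.extCuts_mem i) (hc.extCuts_mem (i + 1))
          (hc.monotone_extCuts i.le_succ)).trans
          (mul_le_mul_of_nonneg_left (hshort i hi).le hΔ)
    _ = (pieceIndices k b).card * (Δ * s) := by rw [Finset.sum_const, nsmul_eq_mul]
    _ ≤ (k + 1) * (Δ * s) := by
        gcongr
        exact_mod_cast card_pieceIndices_le k b

lemma exists_cuts_shrink_interval (hk : 1 ≤ k) (hc : ValidCuts k c) {j : ℕ}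
    (hj : j ∈ pieceIndices k b) {s : ℝ} (hs : 0 ≤ s)
    (hlen : s ≤ extCuts k c (j + 1) - extCuts k c j) :
    ∃ c' : Fin k → ℝ, ValidCuts k c' ∧ extCuts k c j ≤ extCuts k c' j ∧
      extCuts k c' (j + 1) ≤ extCuts k c (j + 1) ∧
      extCuts k c' (j + 1) - extCuts k c' j = extCuts k c (j + 1) - extCuts k c j - s ∧
      ∀ i ∈ pieceIndices k b, i ≠ j →
        extCuts k c' i = extCuts k c i ∧ extCuts k c' (i + 1) = extCuts k c (i + 1) := by
  have hmono := hc.monotone_extCuts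
  -- The right endpoint of the last interval is `1` and not a cut, so there the left one moves.
  rcases (le_of_mem_pieceIndices hj).lt_or_eq with hjk | rfl
  · have hvalid := hc.update ⟨j, hjk⟩ (w := extCuts k c (j + 1) - s)
      ⟨by linarith, by linarith [hmono (Nat.le_succ (j + 1))]⟩
    refine ⟨_, hvalid, ?_⟩
    simp only [extCuts_update, Function.update_self, ne_eq, Nat.left_eq_add, one_ne_zero,
      not_false_eq_true, Function.update_of_ne, le_refl, true_and]
    refine ⟨by linarith, by ring, fun i hi hij => ?_⟩
    rw [Function.update_of_ne (ne_succ_of_mem_pieceIndices hi hj),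
      Function.update_of_ne (by omega)]
    exact ⟨rfl, rfl⟩
  · obtain ⟨p, rfl⟩ : ∃ p, j = p + 1 := ⟨j - 1, by omega⟩
    have hvalid := hc.update (Fin.last p) (w := extCuts (p + 1) c (p + 1) + s)
      ⟨by rw [Fin.val_last]; linarith [hmono p.le_succ], by rw [Fin.val_last]; linarith⟩
    refine ⟨_, hvalid, ?_⟩
    simp only [extCuts_update, Fin.val_last, Function.update_self, ne_eq, Nat.add_eq_left,
      one_ne_zero, not_false_eq_true, Function.update_of_ne, le_refl, true_and]
    refine ⟨by linarith, by ring, fun i hi hij => ?_⟩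
    rw [Function.update_of_ne hij,
      Function.update_of_ne (ne_succ_of_mem_pieceIndices hj hi).symm]
    exact ⟨rfl, rfl⟩

lemma exists_cuts_pieceVal_shrink (hδ : 0 ≤ δ) (hk : 1 ≤ k) (hc : ValidCuts k c) {j : ℕ}
    (hj : j ∈ pieceIndices k b) {s : ℝ} (hs : 0 ≤ s)
    (hlen : s ≤ extCuts k c (j + 1) - extCuts k c j) :
    ∃ c' : Fin k → ℝ, ValidCuts k c' ∧ ∀ v, IsValueDensity δ Δ v →
      pieceVal v (altPiece k c b) - pieceVal v (altPiece k c' b) ∈ Icc (δ * s) (Δ * s) := by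
  obtain ⟨c', hc', hleft, hright, hwidth, hrest⟩ := exists_cuts_shrink_interval hk hc hj hs hlen
  refine ⟨c', hc', fun v hv => ?_⟩
  have hE := hc.extCuts_mem
  have hE' := hc'.extCuts_mem
  have hdiff : pieceVal v (altPiece k c b) - pieceVal v (altPiece k c' b) =
      (∫ x in extCuts k c j..extCuts k c' j, v x) +
        ∫ x in extCuts k c' (j + 1)..extCuts k c (j + 1), v x := by
    rw [pieceVal_altPiece hv hc, pieceVal_altPiece hv hc', ← Finset.sum_sub_distrib,
      Finset.sum_eq_single_of_mem j hj fun i hi hij => by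
        rw [(hrest i hi hij).1, (hrest i hi hij).2, sub_self],
      intervalIntegral.integral_interval_sub_interval_comm
        (hv.intervalIntegrable (hE _) (hE _)) (hv.intervalIntegrable (hE' _) (hE' _))
        (hv.intervalIntegrable (hE _) (hE' _)),
      intervalIntegral.integral_symm (extCuts k c' (j + 1)), sub_neg_eq_add]
  have hs_eq : s = (extCuts k c' j - extCuts k c j) +
      (extCuts k c (j + 1) - extCuts k c' (j + 1)) := by linarith
  rw [hdiff, hs_eq, mul_add, mul_add]
  exact ⟨add_le_add (hv.le_integral (hE _) (hE' _) hleft) (hv.le_integral (hE' _) (hE _) hright),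
    add_le_add (hv.integral_le hδ (hE _) (hE' _) hleft)
      (hv.integral_le hδ (hE' _) (hE _) hright)⟩

end PieceValues

/-- An offer `(c, b)`: Alice cuts at `c` and hopes to keep the piece `altPiece k c b`. Bob refuses
it by taking that piece, so a refused offer is literally the entry `(cuts, choice)` that the round
adds to the history. -/
abbrev Offer (k : ℕ) := (Fin k → ℝ) × Bool

/-- The value under `v` of the piece that Alice keeps if the offer `p` is accepted. -/
def keptVal {k : ℕ} (v : ℝ → ℝ) (p : Offer k) : ℝ := pieceVal v (altPiece k p.1 p.2)

/-- The value under `v` of the piece that Bob receives if he accepts the offer `p`. -/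
def cededVal {k : ℕ} (v : ℝ → ℝ) (p : Offer k) : ℝ := pieceVal v (altPiece k p.1 (!p.2))

/-- The offers whose cut points are valid and lie on the grid `{0, 1/n, …, 1}`. -/
def gridOffers (k n : ℕ) : Finset (Offer k) :=
  {c ∈ Fintype.piFinset fun _ : Fin k => (Finset.range (n + 1)).image fun i : ℕ => (i : ℝ) / n |
    ValidCuts k c} ×ˢ Finset.univ

/-- A multiple of the grid spacing `1/n` bounding what Alice loses by rounding an offer to the grid
while leaving Bob a surplus `1/n`: she first shrinks an interval of her piece by
`((2(k+1)Δ + 1)/δ)/n` and then moves every cut point by at most `1/n`. -/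
def roundingLoss (k : ℕ) (δ Δ : ℝ) : ℝ :=
  (k + 1) * (Δ * ((2 * (k + 1) * Δ + 1) / δ)) + 2 * (k + 1) * Δ

section Grid

variable {δ Δ : ℝ} {vA vB : ℝ → ℝ} {k n : ℕ} {c : Fin k → ℝ} {b : Bool} {p : Offer k}

lemma mem_gridOffers : p ∈ gridOffers k n ↔
    (∀ i, ∃ j ≤ n, (j : ℝ) / n = p.1 i) ∧ ValidCuts k p.1 := by
  simp only [gridOffers, Finset.mem_product, Finset.mem_filter, Fintype.mem_piFinset,
    Finset.mem_image, Finset.mem_range_succ_iff, Finset.mem_univ, and_true]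

lemma validCuts_of_mem_gridOffers (hp : p ∈ gridOffers k n) : ValidCuts k p.1 :=
  (mem_gridOffers.1 hp).2

lemma card_gridOffers_le (k n : ℕ) : (gridOffers k n).card ≤ 2 * (n + 1) ^ k := by
  rw [gridOffers, Finset.card_product, Finset.card_univ, Fintype.card_bool, mul_comm]
  gcongr
  calc _ ≤ _ := Finset.card_filter_le _ _
    _ = ((Finset.range (n + 1)).image fun i : ℕ => (i : ℝ) / n).card ^ k := by
        rw [Fintype.card_piFinset_const]
    _ ≤ (n + 1) ^ k := by
        gcongr
        exact Finset.card_image_le.trans_eq (Finset.card_range _)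

lemma abs_floor_mul_div_sub_le (hn : 0 < n) {x : ℝ} (hx : 0 ≤ x) :
    |(⌊x * n⌋₊ : ℝ) / n - x| ≤ 1 / n := by
  have hn' : (0 : ℝ) < n := Nat.cast_pos.2 hn
  have hfloor := Nat.floor_le (mul_nonneg hx hn'.le)
  have hlt := Nat.lt_floor_add_one (x * n)
  rw [div_sub' hn'.ne', abs_div, abs_of_pos hn', mul_comm (n : ℝ)]
  gcongr
  rw [abs_le]
  constructor <;> linarith

lemma exists_mem_gridOffers_near (hn : 0 < n) (hc : ValidCuts k c) (b : Bool) :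
    ∃ c' : Fin k → ℝ, (c', b) ∈ gridOffers k n ∧ ∀ i, |c' i - c i| ≤ 1 / n := by
  have hfloor (i : Fin k) : ⌊c i * n⌋₊ ≤ n :=
    Nat.floor_le_of_le (mul_le_of_le_one_left n.cast_nonneg (hc.2 i).2)
  refine ⟨fun i => ⌊c i * n⌋₊ / n, mem_gridOffers.2 ⟨fun i => ⟨_, hfloor i, rfl⟩, ?_, ?_⟩,
    fun i => abs_floor_mul_div_sub_le hn (hc.2 i).1⟩
  · intro i j hij
    have := hc.1 hij
    simp only
    gcongr
  · exact fun i => ⟨by positivity, div_le_one_of_le₀ (Nat.cast_le.2 (hfloor i)) n.cast_nonneg⟩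

lemma cededVal_one_false (hB : IsValueDensity δ Δ vB) (k : ℕ) :
    cededVal vB ((fun _ => 1, false) : Offer k) = 1 := by
  have h := pieceVal_add_pieceVal_not hB
    (validCuts_const (k := k) (right_mem_Icc.2 zero_le_one)) false
  rwa [pieceVal_one_false hB k, zero_add] at h

lemma one_false_mem_gridOffers (hn : 0 < n) : ((fun _ => 1, false) : Offer k) ∈ gridOffers k n :=
  mem_gridOffers.2 ⟨fun _ => ⟨n, le_rfl, div_self (Nat.cast_pos.2 hn).ne'⟩,
    validCuts_const (right_mem_Icc.2 zero_le_one)⟩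

lemma roundingLoss_nonneg (hδ : 0 ≤ δ) (hΔ : 0 ≤ Δ) (k : ℕ) : 0 ≤ roundingLoss k δ Δ := by
  unfold roundingLoss
  positivity

lemma exists_robust_gridOffer (hδ : 0 < δ) (hk : 1 ≤ k) (hn : 0 < n)
    (hA : IsValueDensity δ Δ vA) (hB : IsValueDensity δ Δ vB) (hc : ValidCuts k c)
    (hb : 1 / 2 ≤ pieceVal vB (altPiece k c (!b)))
    (hlarge : roundingLoss k δ Δ / n < pieceVal vA (altPiece k c b)) :
    ∃ p ∈ gridOffers k n, 1 / 2 + 1 / (n : ℝ) ≤ cededVal vB p ∧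
      pieceVal vA (altPiece k c b) ≤ keptVal vA p + roundingLoss k δ Δ / n := by
  have hΔ := hA.upper_nonneg hδ.le
  obtain ⟨s, hs⟩ : ∃ s, s = (2 * (k + 1) * Δ + 1) / δ / n := ⟨_, rfl⟩
  have hs0 : 0 ≤ s := by rw [hs]; positivity
  have hloss : roundingLoss k δ Δ / n =
      (k + 1) * (Δ * s) + (k + 1) * (2 * (Δ * (1 / n))) := by
    rw [roundingLoss, hs]; ring
  have hsurplus : δ * s = (k + 1) * (2 * (Δ * (1 / n))) + 1 / n := by
    rw [hs]; field_simp
  have hround : 0 ≤ (k + 1) * (2 * (Δ * (1 / (n : ℝ)))) := by positivity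
  obtain ⟨j, hj, hlen⟩ := exists_long_interval_of_lt_pieceVal hδ.le hA hc hs0
    (show (k + 1) * (Δ * s) < _ by linarith)
  obtain ⟨c₁, hc₁, hshrink⟩ := exists_cuts_pieceVal_shrink (Δ := Δ) hδ.le hk hc hj hs0 hlen
  obtain ⟨c₂, hmem, hnear⟩ := exists_mem_gridOffers_near hn hc₁ b
  have hc₂ := validCuts_of_mem_gridOffers hmem
  have hη : 0 ≤ 1 / (n : ℝ) := by positivity
  refine ⟨(c₂, b), hmem, ?_, ?_⟩
  · have hBround := abs_le.1 (abs_pieceVal_sub_le hδ.le hB hc₁ hc₂ hη hnear b)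
    have hBc := pieceVal_add_pieceVal_not hB hc b
    have hBc₂ := pieceVal_add_pieceVal_not hB hc₂ b
    simp only [cededVal]
    linarith [(hshrink vB hB).1]
  · have hAround := abs_le.1 (abs_pieceVal_sub_le hδ.le hA hc₁ hc₂ hη hnear b)
    have hks : 0 ≤ k * (Δ * s) := by positivity
    simp only [keptVal]
    linarith [(hshrink vA hA).2]

lemma exists_robust_gridOffer_stackelbergValue_le (hδ : 0 < δ) (hk : 1 ≤ k) (hn : 2 ≤ n)
    (hA : IsValueDensity δ Δ vA) (hB : IsValueDensity δ Δ vB) :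
    ∃ p ∈ gridOffers k n, 1 / 2 + 1 / (n : ℝ) ≤ cededVal vB p ∧
      stackelbergValue k vA vB ≤ keptVal vA p + roundingLoss k δ Δ / n := by
  have hn0 : 0 < n := by omega
  have hK := roundingLoss_nonneg hδ.le (hA.upper_nonneg hδ.le) k
  -- Ceding the whole cake is a robust offer, so there is one to maximize over.
  have hne : {p ∈ gridOffers k n | 1 / 2 + 1 / (n : ℝ) ≤ cededVal vB p}.Nonempty := by
    refine ⟨_, Finset.mem_filter.2 ⟨one_false_mem_gridOffers hn0, ?_⟩⟩
    have hhalf : 1 / (n : ℝ) ≤ 1 / 2 := by gcongr; exact_mod_cast hn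
    linarith [cededVal_one_false hB k]
  obtain ⟨p, hp, hmax⟩ := Finset.exists_max_image _ (keptVal vA) hne
  obtain ⟨hpgrid, hprobust⟩ := Finset.mem_filter.1 hp
  have hkept : 0 ≤ keptVal vA p :=
    pieceVal_nonneg hδ.le hA (validCuts_of_mem_gridOffers hpgrid) p.2
  refine ⟨p, hpgrid, hprobust, Real.sSup_le ?_ (by positivity)⟩
  rintro _ ⟨c, b, hc, hb, rfl⟩
  rcases le_or_gt (pieceVal vA (altPiece k c b)) (roundingLoss k δ Δ / n) with hsmall | hlarge
  · linarith
  · obtain ⟨q, hq, hqrobust, hcq⟩ := exists_robust_gridOffer hδ hk hn0 hA hB hc hb hlarge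
    linarith [hmax q (Finset.mem_filter.2 ⟨hq, hqrobust⟩)]

lemma stackelbergValue_le_one (hδ : 0 ≤ δ) (hA : IsValueDensity δ Δ vA) :
    stackelbergValue k vA vB ≤ 1 := by
  refine Real.sSup_le ?_ zero_le_one
  rintro _ ⟨c, b, hc, -, rfl⟩
  exact pieceVal_le_one hδ hA hc b

end Grid

/-- The offers of `P` that Bob has refused fewer than `m` times in the history `h`. -/
def openOffers {k : ℕ} (P : Finset (Offer k)) (m : ℕ) (h : Hist k) : Finset (Offer k) :=
  {p ∈ P | h.count p < m}

/-- An open offer of maximal kept value for Alice; the constant offer `(0, true)` is a default for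
the case that no offer is open. -/
def bestOpenOffer {k : ℕ} (vA : ℝ → ℝ) (P : Finset (Offer k)) (m : ℕ) (h : Hist k) : Offer k :=
  if hne : (openOffers P m h).Nonempty then
    (Finset.exists_max_image (openOffers P m h) (keptVal vA) hne).choose
  else (fun _ => 0, true)

/-- The elimination strategy: at horizon `T` Alice proposes her best offer among those of `P T`
that Bob has refused fewer than `m T` times. -/
def eliminationStrategy {k : ℕ} (vA : ℝ → ℝ) (P : ℕ → Finset (Offer k)) (m : ℕ → ℕ) :
    AliceStrategy k :=
  fun T h => (bestOpenOffer vA (P T) (m T) h).1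

/-- The total number of refusals of offers of `P`, those beyond the `m`-th refusal of an offer not
being counted. It grows exactly when Bob refuses an open offer. -/
def cappedRefusals {k : ℕ} (P : Finset (Offer k)) (m : ℕ) (h : Hist k) : ℕ :=
  ∑ p ∈ P, min (h.count p) m

/-- Bob's regret in round `t`, the summand of `bobRegret`. -/
def bobRoundRegret (k : ℕ) (vB : ℝ → ℝ) (SA : AliceStrategy k) (SB : BobStrategy k)
    (T t : ℕ) : ℝ :=
  max (pieceVal vB (altPiece k (roundCuts k SA SB T t) true))
      (pieceVal vB (altPiece k (roundCuts k SA SB T t) false)) -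
    pieceVal vB (altPiece k (roundCuts k SA SB T t) (roundChoice k SA SB T t))

section Refusals

variable {δ Δ : ℝ} {vA vB : ℝ → ℝ} {k m : ℕ} {P : Finset (Offer k)} {h : Hist k} {p : Offer k}

lemma bestOpenOffer_mem (hne : (openOffers P m h).Nonempty) :
    bestOpenOffer vA P m h ∈ openOffers P m h := by
  rw [bestOpenOffer, dif_pos hne]
  exact (Finset.exists_max_image _ (keptVal vA) hne).choose_spec.1

lemma keptVal_le_keptVal_bestOpenOffer (hp : p ∈ openOffers P m h) :
    keptVal vA p ≤ keptVal vA (bestOpenOffer vA P m h) := by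
  rw [bestOpenOffer, dif_pos ⟨p, hp⟩]
  exact (Finset.exists_max_image _ (keptVal vA) ⟨p, hp⟩).choose_spec.2 p hp

lemma validCuts_bestOpenOffer (hP : ∀ p ∈ P, ValidCuts k p.1) :
    ValidCuts k (bestOpenOffer vA P m h).1 := by
  by_cases hne : (openOffers P m h).Nonempty
  · exact hP _ (Finset.mem_filter.1 (bestOpenOffer_mem hne)).1
  · rw [bestOpenOffer, dif_neg hne]
    exact validCuts_const (left_mem_Icc.2 zero_le_one)

lemma cappedRefusals_append (P : Finset (Offer k)) (m : ℕ) (h : Hist k) (e : Offer k) :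
    cappedRefusals P m (h ++ [e]) =
      cappedRefusals P m h + if e ∈ openOffers P m h then 1 else 0 := by
  have hmin (p : Offer k) : min ((h ++ [e]).count p) m =
      min (h.count p) m + if e = p then (if h.count p < m then 1 else 0) else 0 := by
    rw [List.count_append, List.count_singleton]
    simp only [beq_iff_eq]
    split_ifs <;> omega
  simp only [cappedRefusals, hmin, Finset.sum_add_distrib, Finset.sum_ite_eq, openOffers,
    Finset.mem_filter, ite_and]

lemma cappedRefusals_le (P : Finset (Offer k)) (m : ℕ) (h : Hist k) :
    cappedRefusals P m h ≤ P.card * m :=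
  Finset.sum_le_card_nsmul P _ m fun _ _ => min_le_right _ _

lemma playHist_succ (k : ℕ) (SA : AliceStrategy k) (SB : BobStrategy k) (T t : ℕ) :
    playHist k SA SB T (t + 1) =
      playHist k SA SB T t ++ [(roundCuts k SA SB T t, roundChoice k SA SB T t)] := rfl

lemma bobRoundRegret_nonneg (k : ℕ) (vB : ℝ → ℝ) (SA : AliceStrategy k) (SB : BobStrategy k)
    (T t : ℕ) : 0 ≤ bobRoundRegret k vB SA SB T t := by
  unfold bobRoundRegret
  cases roundChoice k SA SB T t
  · exact sub_nonneg.2 (le_max_right _ _)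
  · exact sub_nonneg.2 (le_max_left _ _)

lemma two_mul_le_bobRoundRegret (hB : IsValueDensity δ Δ vB) (hp : ValidCuts k p.1) {g : ℝ}
    (hg : 1 / 2 + g ≤ cededVal vB p) {SA : AliceStrategy k} {SB : BobStrategy k} {T t : ℕ}
    (ht : (roundCuts k SA SB T t, roundChoice k SA SB T t) = p) :
    2 * g ≤ bobRoundRegret k vB SA SB T t := by
  subst ht
  have hadd := pieceVal_add_pieceVal_not hB hp (roundChoice k SA SB T t)
  have hmax : cededVal vB (roundCuts k SA SB T t, roundChoice k SA SB T t) ≤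
      max (pieceVal vB (altPiece k (roundCuts k SA SB T t) true))
        (pieceVal vB (altPiece k (roundCuts k SA SB T t) false)) := by
    unfold cededVal
    cases roundChoice k SA SB T t
    · exact le_max_left _ _
    · exact le_max_right _ _
  unfold bobRoundRegret
  simp only [cededVal] at hg hmax
  linarith

lemma count_mul_le_sum_bobRoundRegret (hB : IsValueDensity δ Δ vB) (hp : ValidCuts k p.1) {g : ℝ}
    (hg : 1 / 2 + g ≤ cededVal vB p) (SA : AliceStrategy k) (SB : BobStrategy k) (T t : ℕ) :
    (playHist k SA SB T t).count p * (2 * g) ≤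
      ∑ s ∈ Finset.range t, bobRoundRegret k vB SA SB T s := by
  induction t with
  | zero => simp [playHist]
  | succ t ih =>
    rw [playHist_succ, List.count_append, List.count_singleton, Finset.sum_range_succ,
      Nat.cast_add, add_mul]
    refine add_le_add ih ?_
    simp only [beq_iff_eq]
    split_ifs with ht
    · simpa using two_mul_le_bobRoundRegret hB hp hg ht
    · simpa using bobRoundRegret_nonneg k vB SA SB T t

lemma count_mul_le_bobRegret (hB : IsValueDensity δ Δ vB) (hp : ValidCuts k p.1) {g : ℝ}
    (hg : 1 / 2 + g ≤ cededVal vB p) (SA : AliceStrategy k) (SB : BobStrategy k) {T t : ℕ}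
    (ht : t ≤ T) :
    (playHist k SA SB T t).count p * (2 * g) ≤ bobRegret k vB SA SB T :=
  (count_mul_le_sum_bobRoundRegret hB hp hg SA SB T t).trans <|
    Finset.sum_le_sum_of_subset_of_nonneg (Finset.range_mono ht) fun s _ _ =>
      bobRoundRegret_nonneg k vB SA SB T s

lemma mem_openOffers_of_bobRegret_lt (hB : IsValueDensity δ Δ vB) (hpP : p ∈ P)
    (hp : ValidCuts k p.1) {g : ℝ} (hg0 : 0 ≤ g) (hg : 1 / 2 + g ≤ cededVal vB p)
    {SA : AliceStrategy k} {SB : BobStrategy k} {T t : ℕ} (ht : t ≤ T)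
    (hreg : bobRegret k vB SA SB T < m * (2 * g)) :
    p ∈ openOffers P m (playHist k SA SB T t) := by
  refine Finset.mem_filter.2 ⟨hpP, ?_⟩
  have hlt := (count_mul_le_bobRegret hB hp hg SA SB ht).trans_lt hreg
  exact_mod_cast lt_of_mul_lt_mul_right hlt (by positivity)

end Refusals

section EliminationStrategy

variable {δ Δ : ℝ} {vA vB : ℝ → ℝ} {k : ℕ} {P : ℕ → Finset (Offer k)} {m : ℕ → ℕ} {p : Offer k}
  {SB : BobStrategy k} {T t : ℕ} {u ε : ℝ}

lemma aliceValid_eliminationStrategy (hP : ∀ T, ∀ p ∈ P T, ValidCuts k p.1) :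
    AliceValid k (eliminationStrategy vA P m) :=
  fun T _ => validCuts_bestOpenOffer (hP T)

lemma eliminationStrategy_round_le (hδ : 0 ≤ δ) (hA : IsValueDensity δ Δ vA)
    (hP : ∀ p ∈ P T, ValidCuts k p.1) (hu : u ≤ 1) (hε : 0 ≤ ε)
    (hp : p ∈ openOffers (P T) (m T) (playHist k (eliminationStrategy vA P m) SB T t))
    (hup : u ≤ keptVal vA p + ε) :
    u - pieceVal vA (altPiece k (roundCuts k (eliminationStrategy vA P m) SB T t)
        (!roundChoice k (eliminationStrategy vA P m) SB T t)) ≤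
      ε + (cappedRefusals (P T) (m T) (playHist k (eliminationStrategy vA P m) SB T (t + 1)) -
        cappedRefusals (P T) (m T) (playHist k (eliminationStrategy vA P m) SB T t)) := by
  set h := playHist k (eliminationStrategy vA P m) SB T t with hh
  set choice := roundChoice k (eliminationStrategy vA P m) SB T t with hchoice
  set best := bestOpenOffer vA (P T) (m T) h
  have hcuts : roundCuts k (eliminationStrategy vA P m) SB T t = best.1 := rfl
  rw [playHist_succ, cappedRefusals_append, ← hchoice, ← hh, hcuts]
  push_cast
  rw [add_sub_cancel_left]
  rcases Bool.eq_or_eq_not choice best.2 with hrefused | haccepted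
  · have hmem : (best.1, choice) ∈ openOffers (P T) (m T) h :=
      hrefused ▸ bestOpenOffer_mem ⟨p, hp⟩
    rw [if_pos hmem]
    linarith [pieceVal_nonneg hδ hA (validCuts_bestOpenOffer hP : ValidCuts k best.1) (!choice)]
  · have hkept : pieceVal vA (altPiece k best.1 (!choice)) = keptVal vA best := by
      rw [haccepted, Bool.not_not, keptVal]
    have hgain : (0 : ℝ) ≤ if (best.1, choice) ∈ openOffers (P T) (m T) h then 1 else 0 := by
      positivity
    linarith [keptVal_le_keptVal_bestOpenOffer (vA := vA) hp]

lemma aliceRegret_eliminationStrategy_le (hδ : 0 ≤ δ) (hA : IsValueDensity δ Δ vA)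
    (hB : IsValueDensity δ Δ vB) (hP : ∀ p ∈ P T, ValidCuts k p.1) (hε : 0 ≤ ε) {g : ℝ}
    (hg : 0 ≤ g) (hpP : p ∈ P T) (hpB : 1 / 2 + g ≤ cededVal vB p)
    (hpA : stackelbergValue k vA vB ≤ keptVal vA p + ε)
    (hreg : bobRegret k vB (eliminationStrategy vA P m) SB T < m T * (2 * g)) :
    aliceRegret k vA vB (eliminationStrategy vA P m) SB T ≤ T * ε + (P T).card * m T := by
  let refusals : ℕ → ℝ := fun t =>
    cappedRefusals (P T) (m T) (playHist k (eliminationStrategy vA P m) SB T t)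
  calc aliceRegret k vA vB (eliminationStrategy vA P m) SB T
      ≤ ∑ t ∈ Finset.range T, (ε + (refusals (t + 1) - refusals t)) :=
        Finset.sum_le_sum fun t ht => eliminationStrategy_round_le hδ hA hP
          (stackelbergValue_le_one hδ hA) hε
          (mem_openOffers_of_bobRegret_lt hB hpP (hP p hpP) hg hpB
            (Finset.mem_range.1 ht).le hreg) hpA
    _ = T * ε + (refusals T - refusals 0) := by
        rw [Finset.sum_add_distrib, Finset.sum_range_sub, Finset.sum_const, Finset.card_range,
          nsmul_eq_mul]
    _ ≤ T * ε + refusals T := by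
        gcongr
        exact sub_le_self _ (Nat.cast_nonneg _)
    _ ≤ T * ε + (P T).card * m T := by
        gcongr
        exact (Nat.cast_le.2 (cappedRefusals_le _ _ _)).trans_eq (Nat.cast_mul _ _)

end EliminationStrategy

/-- The resolution `n` of the grid that Alice uses at horizon `T`. -/
def gridResolution (T : ℕ) : ℕ := ⌈Real.log T⌉₊

/-- The number of refusals after which Alice withdraws an offer at horizon `T`: large enough that
Bob cannot afford it for an offer with surplus `1/n`, and small enough that the refusals of all the
offers of the `1/n`-grid sum to `O(T / n)`. -/
def refusalCap (k T : ℕ) : ℕ := ⌈(T : ℝ) / ((gridResolution T : ℝ) + 1) ^ (k + 1)⌉₊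

/-- The elimination strategy for the offers on the grid of resolution `gridResolution T`. -/
def gridStrategy (k : ℕ) (vA : ℝ → ℝ) : AliceStrategy k :=
  eliminationStrategy vA (fun T => gridOffers k (gridResolution T)) (refusalCap k)

section Rates

open Filter Asymptotics

lemma isLittleO_const_mul_rpow_div_log_pow {α : ℝ} (hα : α < 1) (c : ℝ) (m : ℕ) :
    (fun T : ℕ => c * (T : ℝ) ^ α) =o[atTop] fun T : ℕ => (T : ℝ) / Real.log T ^ m := by
  have hlog : (fun x : ℝ => Real.log x ^ m) =o[atTop] fun x : ℝ => x ^ (1 - α) := by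
    simpa only [Real.rpow_natCast] using isLittleO_log_rpow_rpow_atTop (m : ℝ) (sub_pos.2 hα)
  have hreal : (fun x : ℝ => x ^ α) =o[atTop] fun x : ℝ => x / Real.log x ^ m := by
    refine ((isBigO_refl (fun x : ℝ => x ^ α / Real.log x ^ m) atTop).mul_isLittleO hlog).congr'
      ?_ ?_
    · filter_upwards [eventually_gt_atTop 1] with x hx
      exact div_mul_cancel₀ _ (pow_pos (Real.log_pos hx) m).ne'
    · filter_upwards [eventually_gt_atTop 0] with x hx
      rw [div_mul_eq_mul_div, ← Real.rpow_add hx, add_sub_cancel, Real.rpow_one]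
  exact (hreal.comp_tendsto tendsto_natCast_atTop_atTop).const_mul_left c

lemma eventually_two_mul_log_pow_le (m : ℕ) :
    ∀ᶠ T : ℕ in atTop, (2 * Real.log T) ^ m ≤ T := by
  have h : (fun x : ℝ => (2 * Real.log x) ^ m) =o[atTop] (id : ℝ → ℝ) := by
    simpa only [mul_pow] using (Real.isLittleO_pow_log_id_atTop (n := m)).const_mul_left (2 ^ m)
  filter_upwards [tendsto_natCast_atTop_atTop.eventually (h.bound one_pos)] with T hT
  exact (le_abs_self _).trans (by simpa using hT)

lemma eventually_le_log (x : ℝ) : ∀ᶠ T : ℕ in atTop, x ≤ Real.log T :=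
  (Real.tendsto_log_atTop.comp tendsto_natCast_atTop_atTop).eventually_ge_atTop x

lemma log_le_gridResolution (T : ℕ) : Real.log T ≤ gridResolution T := Nat.le_ceil _

lemma gridResolution_add_one_le {T : ℕ} (hT : 2 ≤ Real.log T) :
    (gridResolution T : ℝ) + 1 ≤ 2 * Real.log T := by
  have := Nat.ceil_lt_add_one (show 0 ≤ Real.log T by linarith)
  unfold gridResolution
  linarith

lemma card_gridOffers_mul_refusalCap_le {k T : ℕ} (hT : 2 ≤ Real.log T)
    (hpow : (2 * Real.log T) ^ (k + 1) ≤ T) :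
    ((gridOffers k (gridResolution T)).card : ℝ) * refusalCap k T ≤ 4 * T / Real.log T := by
  have hN := gridResolution_add_one_le hT
  have hlogN := log_le_gridResolution T
  have hcard : ((gridOffers k (gridResolution T)).card : ℝ) ≤
      2 * ((gridResolution T : ℝ) + 1) ^ k := by
    exact_mod_cast card_gridOffers_le k (gridResolution T)
  set N : ℝ := gridResolution T + 1
  have hN0 : 0 < N := by positivity
  have hcap : (refusalCap k T : ℝ) ≤ 2 * (T / N ^ (k + 1)) := by
    have hone : 1 ≤ T / N ^ (k + 1) :=
      (one_le_div (by positivity)).2 ((pow_le_pow_left₀ hN0.le hN _).trans hpow)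
    have := Nat.ceil_lt_add_one (zero_le_one.trans hone)
    rw [refusalCap]
    linarith
  calc ((gridOffers k (gridResolution T)).card : ℝ) * refusalCap k T
      ≤ 2 * N ^ k * (2 * (T / N ^ (k + 1))) := by gcongr
    _ = 4 * T / N := by field_simp; ring
    _ ≤ 4 * T / Real.log T := by gcongr; linarith

lemma div_two_mul_log_pow_lt_refusalCap {k T : ℕ} (hT : 2 ≤ Real.log T) :
    T / (2 * Real.log T) ^ (k + 2) < refusalCap k T * (2 * (1 / (gridResolution T : ℝ))) := by
  have hT0 : 0 < (T : ℝ) := by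
    rcases T.eq_zero_or_pos with rfl | h
    · norm_num at hT
    · exact_mod_cast h
  have hn0 : 0 < (gridResolution T : ℝ) := Nat.cast_pos.2 (Nat.ceil_pos.2 (by linarith))
  have hN := gridResolution_add_one_le hT
  have hcap : T / ((gridResolution T : ℝ) + 1) ^ (k + 1) ≤ refusalCap k T := Nat.le_ceil _
  calc T / (2 * Real.log T) ^ (k + 2)
      ≤ T / ((gridResolution T : ℝ) + 1) ^ (k + 2) := by gcongr
    _ = T / ((gridResolution T : ℝ) + 1) ^ (k + 1) * (1 / (gridResolution T + 1)) := by
        rw [pow_succ _ (k + 1)]; field_simp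
    _ < T / ((gridResolution T : ℝ) + 1) ^ (k + 1) * (2 * (1 / gridResolution T)) := by
        gcongr
        calc 1 / ((gridResolution T : ℝ) + 1) < 1 / gridResolution T := by gcongr; linarith
          _ ≤ 2 * (1 / gridResolution T) := by
            linarith [show 0 < 1 / (gridResolution T : ℝ) by positivity]
    _ ≤ refusalCap k T * (2 * (1 / gridResolution T)) := by gcongr

lemma aliceValid_gridStrategy (k : ℕ) (vA : ℝ → ℝ) : AliceValid k (gridStrategy k vA) :=
  aliceValid_eliminationStrategy fun _ _ => validCuts_of_mem_gridOffers

lemma aliceRegret_gridStrategy_le {δ Δ : ℝ} {vA vB : ℝ → ℝ} {k T : ℕ} {SB : BobStrategy k}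
    (hδ : 0 < δ) (hk : 1 ≤ k) (hA : IsValueDensity δ Δ vA) (hB : IsValueDensity δ Δ vB)
    (hT : 2 ≤ Real.log T) (hpow : (2 * Real.log T) ^ (k + 1) ≤ T)
    (hreg : bobRegret k vB (gridStrategy k vA) SB T ≤ T / (2 * Real.log T) ^ (k + 2)) :
    aliceRegret k vA vB (gridStrategy k vA) SB T ≤
      (roundingLoss k δ Δ + 4) * T / Real.log T := by
  have hK := roundingLoss_nonneg hδ.le (hA.upper_nonneg hδ.le) k
  have hlogn := log_le_gridResolution T
  have hn : 2 ≤ gridResolution T := by exact_mod_cast hT.trans hlogn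
  obtain ⟨p, hp, hpB, hpA⟩ := exists_robust_gridOffer_stackelbergValue_le hδ hk hn hA hB
  calc aliceRegret k vA vB (gridStrategy k vA) SB T
      ≤ T * (roundingLoss k δ Δ / gridResolution T) +
          (gridOffers k (gridResolution T)).card * refusalCap k T :=
        aliceRegret_eliminationStrategy_le hδ.le hA hB (fun _ => validCuts_of_mem_gridOffers)
          (by positivity) (by positivity) hp hpB hpA
          (hreg.trans_lt (div_two_mul_log_pow_lt_refusalCap hT))
    _ ≤ T * (roundingLoss k δ Δ / Real.log T) + 4 * T / Real.log T := by
        gcongr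
        exact card_gridOffers_mul_refusalCap_le hT hpow
    _ = (roundingLoss k δ Δ + 4) * T / Real.log T := by ring

lemma eventually_le_div_two_mul_log_pow {R : ℕ → ℝ} {m : ℕ}
    (hR : R =o[atTop] fun T : ℕ => (T : ℝ) / Real.log T ^ m) :
    ∀ᶠ T : ℕ in atTop, R T ≤ T / (2 * Real.log T) ^ m := by
  filter_upwards [hR.bound (c := (1 / 2) ^ m) (by positivity)] with T hT
  rw [Real.norm_of_nonneg (by positivity : 0 ≤ (T : ℝ) / Real.log T ^ m)] at hT
  refine (le_abs_self _).trans (hT.trans_eq ?_)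
  rw [div_pow, one_pow, mul_pow, div_mul_div_comm, one_mul]

lemma mul_div_log_le_mul_rpow_div_log {C s : ℝ} {k : ℕ} (hC : 0 ≤ C) (hk : 1 ≤ k) (hs : 0 ≤ s)
    (T : ℕ) : C * T / Real.log T ≤ C * T * (k : ℝ) ^ s / Real.log T :=
  div_le_div_of_nonneg_right
    (le_mul_of_one_le_right (by positivity) (Real.one_le_rpow (Nat.one_le_cast.2 hk) hs))
    (Real.log_natCast_nonneg T)

end Rates

theorem k_cut_private_rate_upper_general (δ Δ : ℝ) (hδ : 0 < δ) (hδΔ : δ ≤ Δ) (k : ℕ)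
    (hk : 1 ≤ k) :
    ∃ C : ℝ, 0 < C ∧ ∀ vA : ℝ → ℝ, IsValueDensity δ Δ vA →
      ∃ SA : AliceStrategy k, AliceValid k SA ∧
        ∀ R : ℕ → ℝ, R =o[Filter.atTop] (fun T : ℕ => (T : ℝ) / Real.log T ^ (k + 2)) →
          ∀ᶠ T : ℕ in Filter.atTop, ∀ vB : ℝ → ℝ, IsValueDensity δ Δ vB → ∀ SB : BobStrategy k,
            bobRegret k vB SA SB T ≤ R T →
              aliceRegret k vA vB SA SB T ≤ C * T / Real.log T := by
  have hK := roundingLoss_nonneg hδ.le (hδ.le.trans hδΔ) k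
  refine ⟨roundingLoss k δ Δ + 4, by positivity, fun vA hA =>
    ⟨gridStrategy k vA, aliceValid_gridStrategy k vA, fun R hR => ?_⟩⟩
  filter_upwards [eventually_le_log 2, eventually_two_mul_log_pow_le (k + 1),
    eventually_le_div_two_mul_log_pow hR] with T hT hpow hRT vB hB SB hreg
  exact aliceRegret_gridStrategy_le hδ hk hA hB hT hpow (hreg.trans hRT)

/-- `k ≥ 3` cuts, non-myopic Bob with private learning rate, upper bound:
for every Alice value density there is a deterministic Alice strategy, independent of `α`
and `c`, such that for every `α < 1` and `c > 0` there are `C > 0` and `T₀` with: against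
every Bob value density and every Bob strategy guaranteeing regret at most `c·T'^α` for all
horizons, Alice's Stackelberg regret over any horizon `T ≥ T₀` is at most
`C·T·k^{3/4}/log T`. -/
theorem k_cut_private_rate_upper (δ Δ : ℝ) (hδ : 0 < δ) (hδΔ : δ ≤ Δ)
    (k : ℕ) (hk : 3 ≤ k) :
    ∀ vA : ℝ → ℝ, IsValueDensity δ Δ vA →
      ∃ SA : AliceStrategy k, AliceValid k SA ∧
        ∀ α : ℝ, α < 1 →
          ∀ c : ℝ, 0 < c →
            ∃ (C : ℝ) (T₀ : ℕ), 0 < C ∧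
              ∀ vB : ℝ → ℝ, IsValueDensity δ Δ vB →
                ∀ SB : BobStrategy k,
                  BobGuarantees k vB SB (fun T' => c * (T' : ℝ) ^ α) →
                  ∀ T : ℕ, T₀ ≤ T →
                    aliceRegret k vA vB SA SB T ≤
                      C * (T : ℝ) * (k : ℝ) ^ ((3 : ℝ) / 4) / Real.log T := by
  intro vA hA
  obtain ⟨C, hC, hgeneral⟩ := k_cut_private_rate_upper_general δ Δ hδ hδΔ k (by omega)
  obtain ⟨SA, hSA, hregret⟩ := hgeneral vA hA
  refine ⟨SA, hSA, fun α hα c _ => ?_⟩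
  obtain ⟨T₀, hT₀⟩ := Filter.eventually_atTop.1
    (hregret _ (isLittleO_const_mul_rpow_div_log_pow hα c (k + 2)))
  exact ⟨C, T₀, hC, fun vB hB SB hSB T hT => (hT₀ T hT vB hB SB (hSB SA T)).trans
    (mul_div_log_le_mul_rpow_div_log hC.le (by omega) (by norm_num) T)⟩

end
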